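/- arXiv:2309.02584 — 2 statements merged into one kernel-verified Lean document; each statement's English description precedes it below -/
import Mathlib

section
/- Let a_j, a_k, ν_j, ν_k > 0 and let g_{jk}(x) := (a_j + i x)^{−ν_j − 1/2}(a_k − i x)^{−ν_k − 1/2}, with C^Re(h) := ∫_ℝ e^{i h x} g_{jk}(x) dx (a real-valued function of h). Then for every h ∈ ℝ the principal value Hilbert transform of C^Re at h exists, and the cross-covariance component with purely imaginary directional measure satisfies C^Im(h) := ∫_ℝ e^{i h x} · i · sign(x) · g_{jk}(x) dx = − lim_{ε→0⁺} (1/π) ∫_{{u : |h−u| > ε}} C^Re(u) / (h − u) du. That is, C^Im = −H[C^Re]. -/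
/-!
The Hilbert transform acts on `e^{iux}` as the multiplier `-i sign x`; this file justifies the
exchange of that computation with the integral defining `C^Re`.

Folding the truncated integral around `h` gives
`∫_{|h-u|>ε} C(u)/(h-u) du = ∫_ε^∞ (C(h-t) - C(h+t))/t dt`. On a bounded range `ε < t < R`, Fubini
turns the right side into `∫ e^{ihx} g(x) (-2i)(Si(Rx) - Si(εx)) dx` (`integral_annulus_eq`), where
`Si` is the sine integral. Since `Si` is bounded and tends to `±π/2` at `±∞`
(`tendsto_sinInt_atTop`, `exists_abs_sinInt_le`), dominated convergence allows `R → ∞` and then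
`ε → 0⁺`, which leaves the multiplier `-iπ sign x` (`tendsto_integral_trunc`).

The truncated integrals must converge absolutely, for otherwise the Bochner integral would be `0`.
As `g` and `g'` are integrable, integration by parts gives `C(u) = O(1/|u|)`
(`abs_mul_norm_fourierExp_le`), so the integrand is `O(1/u²)`. Realness of `C^Re` is the Hermitian
symmetry of `g`, and `C^Im` is real as a limit of real numbers.
-/

open MeasureTheory Complex Topology Filter

/-! ### The sine integral -/

/-- The sine integral `Si(y) = ∫₀^y sin t / t dt`. -/
noncomputable def sinInt (y : ℝ) : ℝ := ∫ t in (0 : ℝ)..y, Real.sinc t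

lemma sinInt_neg (y : ℝ) : sinInt (-y) = -sinInt y := by
  have h := intervalIntegral.integral_comp_neg (a := 0) (b := y) (f := Real.sinc)
  simp only [Real.sinc_neg, neg_zero] at h
  rw [sinInt, sinInt, h, intervalIntegral.integral_symm]

lemma continuous_sinInt : Continuous sinInt :=
  intervalIntegral.continuous_primitive
    (fun a b => Real.continuous_sinc.intervalIntegrable a b) 0

/-- The `t`-integral in the Laplace representation of the sine integral. -/
lemma integral_sin_mul_exp (R s : ℝ) :
    ∫ t in (0 : ℝ)..R, Real.sin t * Real.exp (-s * t) =
      (1 + s ^ 2)⁻¹ - Real.exp (-s * R) * (Real.cos R + s * Real.sin R) / (1 + s ^ 2) := by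
  have hs : (1 + s ^ 2) ≠ 0 := by positivity
  have hd : ∀ t ∈ Set.uIcc 0 R, HasDerivAt
      (fun t => -(Real.exp (-s * t) * (Real.cos t + s * Real.sin t) / (1 + s ^ 2)))
      (Real.sin t * Real.exp (-s * t)) t := by
    intro t _
    have h1 : HasDerivAt (fun t => Real.exp (-s * t)) (Real.exp (-s * t) * (-s)) t := by
      simpa using ((hasDerivAt_id t).const_mul (-s)).exp
    have h2 := (Real.hasDerivAt_cos t).add ((Real.hasDerivAt_sin t).const_mul s)
    refine ((h1.mul h2).div_const (1 + s ^ 2)).neg.congr_deriv ?_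
    simp only [Pi.add_apply]
    field_simp
    ring
  rw [intervalIntegral.integral_eq_sub_of_hasDerivAt hd
    (Continuous.intervalIntegrable (by fun_prop) _ _)]
  simp
  ring

/-- The Laplace representation `Si(R) = ∫₀^∞ ∫₀^R sin t e^{-st} dt ds`, by Fubini from
`1 / t = ∫₀^∞ e^{-st} ds`. -/
lemma sinInt_eq_laplace {R : ℝ} (hR : 0 < R) :
    sinInt R = ∫ s in Set.Ioi (0 : ℝ), ((1 + s ^ 2)⁻¹ -
      Real.exp (-s * R) * (Real.cos R + s * Real.sin R) / (1 + s ^ 2)) := by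
  have hexp : ∀ t : ℝ, 0 < t → ∫ s in Set.Ioi (0 : ℝ), Real.exp (-s * t) = t⁻¹ := by
    intro t ht
    have := integral_exp_mul_Ioi (a := -t) (by linarith) 0
    simp only [mul_zero, Real.exp_zero] at this
    rw [show (fun s => Real.exp (-s * t)) = fun s => Real.exp (-t * s) by
      ext s; congr 1; ring, this]
    field_simp
  have hint : ∀ t : ℝ, 0 < t → IntegrableOn (fun s => Real.exp (-s * t)) (Set.Ioi 0) := by
    intro t ht
    have := integrableOn_exp_mul_Ioi (a := -t) (by linarith) 0
    refine this.congr_fun (fun s _ => ?_) measurableSet_Ioi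
    simp only; congr 1; ring
  have hprod : Integrable (Function.uncurry fun t s : ℝ => Real.sin t * Real.exp (-s * t))
      ((volume.restrict (Set.Ioc 0 R)).prod (volume.restrict (Set.Ioi 0))) := by
    rw [integrable_prod_iff (by
      apply Continuous.aestronglyMeasurable
      unfold Function.uncurry
      fun_prop)]
    constructor
    · filter_upwards [ae_restrict_mem measurableSet_Ioc] with t ht
      exact (hint t ht.1).const_mul (Real.sin t)
    · have : IntegrableOn (fun t => |Real.sinc t|) (Set.Ioc 0 R) :=
        (Real.continuous_sinc.abs.integrableOn_Icc).mono_set Set.Ioc_subset_Icc_self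
      refine this.congr_fun (fun t ht => ?_) measurableSet_Ioc
      simp only [Function.uncurry, norm_mul, Real.norm_eq_abs, Real.abs_exp]
      rw [integral_const_mul, hexp t ht.1, Real.sinc_of_ne_zero ht.1.ne', abs_div,
        abs_of_pos ht.1, div_eq_mul_inv]
  have hswap := integral_integral_swap hprod
  rw [sinInt, intervalIntegral.integral_of_le hR.le]
  calc ∫ t in Set.Ioc 0 R, Real.sinc t
      = ∫ t in Set.Ioc 0 R, ∫ s in Set.Ioi (0 : ℝ), Real.sin t * Real.exp (-s * t) := by
        refine setIntegral_congr_fun measurableSet_Ioc (fun t ht => ?_)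
        rw [integral_const_mul, hexp t ht.1, Real.sinc_of_ne_zero ht.1.ne', div_eq_mul_inv]
    _ = _ := hswap
    _ = _ := by
        refine setIntegral_congr_fun measurableSet_Ioi (fun s _ => ?_)
        rw [← intervalIntegral.integral_of_le hR.le, integral_sin_mul_exp]

/-- The Dirichlet integral. -/
lemma tendsto_sinInt_atTop : Tendsto sinInt atTop (𝓝 (Real.pi / 2)) := by
  have hpi : ∫ s in Set.Ioi (0 : ℝ), (1 + s ^ 2)⁻¹ = Real.pi / 2 := by
    simp [integral_Ioi_inv_one_add_sq]
  rw [← hpi]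
  have h1 : IntegrableOn (fun s : ℝ => (1 + s ^ 2)⁻¹) (Set.Ioi 0) :=
    integrable_inv_one_add_sq.integrableOn
  have h2 : IntegrableOn (fun s : ℝ => Real.exp (-s)) (Set.Ioi 0) := by
    simpa using integrableOn_exp_mul_Ioi (a := -1) (by norm_num) 0
  have hlim : Tendsto (fun R : ℝ => ∫ s in Set.Ioi (0 : ℝ), ((1 + s ^ 2)⁻¹ -
      Real.exp (-s * R) * (Real.cos R + s * Real.sin R) / (1 + s ^ 2))) atTop
      (𝓝 (∫ s in Set.Ioi (0 : ℝ), (1 + s ^ 2)⁻¹)) := by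
    have hbd : ∀ R s : ℝ, 0 < s → |(Real.cos R + s * Real.sin R) / (1 + s ^ 2)| ≤ 2 := by
      intro R s hs
      rw [abs_div, abs_of_pos (show 0 < 1 + s ^ 2 by positivity), div_le_iff₀ (by positivity)]
      have a1 := Real.abs_cos_le_one R
      have a2 := Real.abs_sin_le_one R
      calc |Real.cos R + s * Real.sin R| ≤ |Real.cos R| + |s * Real.sin R| := abs_add_le _ _
        _ ≤ 1 + s * 1 := by
            rw [abs_mul, abs_of_pos hs]
            gcongr
        _ ≤ 2 * (1 + s ^ 2) := by nlinarith [sq_nonneg (s - 1)]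
    refine tendsto_integral_filter_of_dominated_convergence
      (fun s => (1 + s ^ 2)⁻¹ + Real.exp (-s) * 2) ?_ ?_ (h1.add (h2.mul_const 2)) ?_
    · refine Eventually.of_forall fun R => Measurable.aestronglyMeasurable (by fun_prop)
    · filter_upwards [eventually_ge_atTop 1] with R hR
      filter_upwards [ae_restrict_mem measurableSet_Ioi] with s hs
      have hs' : 0 < s := hs
      refine (norm_sub_le _ _).trans ?_
      rw [mul_div_assoc, norm_mul, Real.norm_eq_abs, Real.norm_eq_abs, Real.norm_eq_abs,
        Real.abs_exp, abs_of_pos (show 0 < (1 + s ^ 2)⁻¹ by positivity)]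
      gcongr
      · nlinarith
      · exact hbd R s hs'
    · filter_upwards [ae_restrict_mem measurableSet_Ioi] with s hs
      have hs' : 0 < s := hs
      have hz : Tendsto (fun R : ℝ => Real.exp (-s * R) * ((Real.cos R + s * Real.sin R)
          / (1 + s ^ 2))) atTop (𝓝 0) := by
        refine squeeze_zero_norm (a := fun R => Real.exp (-s * R) * 2) (fun R => ?_) ?_
        · rw [norm_mul, Real.norm_eq_abs, Real.norm_eq_abs, Real.abs_exp]
          gcongr
          exact hbd R s hs'
        · have : Tendsto (fun R : ℝ => -s * R) atTop atBot :=
            tendsto_id.const_mul_atTop_of_neg (by linarith)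
          simpa using (Real.tendsto_exp_atBot.comp this).mul_const 2
      simpa [mul_div_assoc] using (tendsto_const_nhds (x := (1 + s ^ 2)⁻¹)).sub hz
  refine hlim.congr' ?_
  filter_upwards [eventually_gt_atTop 0] with R hR
  exact (sinInt_eq_laplace hR).symm

lemma exists_abs_sinInt_le : ∃ M : ℝ, ∀ y, |sinInt y| ≤ M := by
  obtain ⟨N, hN⟩ := eventually_atTop.1
    (tendsto_sinInt_atTop.abs.eventually_le_const (lt_add_one _))
  obtain ⟨M, hM⟩ := (isCompact_Icc (a := (0 : ℝ)) (b := N)).exists_bound_of_continuousOn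
    continuous_sinInt.continuousOn
  refine ⟨max M (|Real.pi / 2| + 1), ?_⟩
  have key : ∀ y, 0 ≤ y → |sinInt y| ≤ max M (|Real.pi / 2| + 1) := by
    intro y hy
    rcases le_total N y with h | h
    · exact (hN y h).trans (le_max_right _ _)
    · exact (hM y ⟨hy, h⟩).trans (le_max_left _ _)
  intro y
  rcases le_total 0 y with h | h
  · exact key y h
  · simpa [sinInt_neg] using key (-y) (by linarith)

lemma tendsto_sinInt_mul (x : ℝ) :
    Tendsto (fun R => sinInt (R * x)) atTop (𝓝 (Real.pi / 2 * Real.sign x)) := by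
  rcases lt_trichotomy x 0 with h | h | h
  · have : Tendsto (fun R => -sinInt (R * -x)) atTop (𝓝 (-(Real.pi / 2))) :=
      (tendsto_sinInt_atTop.comp (tendsto_id.atTop_mul_const (by linarith))).neg
    rw [Real.sign_of_neg h]
    simpa [← sinInt_neg] using this
  · simp [h, sinInt]
  · rw [Real.sign_of_pos h, mul_one]
    exact tendsto_sinInt_atTop.comp (tendsto_id.atTop_mul_const h)

/-! ### Hilbert transform of a Fourier transform -/

/-- The Fourier transform `u ↦ ∫ e^{iux} g(x) dx`. -/
noncomputable def fourierExp (g : ℝ → ℂ) (u : ℝ) : ℂ :=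
  ∫ x : ℝ, Complex.exp (Complex.I * ((u * x : ℝ) : ℂ)) * g x

lemma norm_exp_I_mul_ofReal' (y : ℝ) : ‖Complex.exp (Complex.I * (y : ℂ))‖ = 1 := by
  rw [mul_comm]; exact Complex.norm_exp_ofReal_mul_I y

lemma integrable_exp_mul {g : ℝ → ℂ} (hg : Integrable g) (u : ℝ) :
    Integrable fun x : ℝ => Complex.exp (Complex.I * ((u * x : ℝ) : ℂ)) * g x := by
  refine hg.bdd_mul (c := 1) (Continuous.aestronglyMeasurable (by fun_prop)) ?_
  exact Eventually.of_forall fun x => (norm_exp_I_mul_ofReal' _).le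

lemma norm_fourierExp_le (g : ℝ → ℂ) (u : ℝ) : ‖fourierExp g u‖ ≤ ∫ x, ‖g x‖ := by
  refine (norm_integral_le_integral_norm _).trans_eq ?_
  simp_rw [norm_mul, norm_exp_I_mul_ofReal', one_mul]

lemma continuous_fourierExp {g : ℝ → ℂ} (hg : Integrable g) : Continuous (fourierExp g) := by
  refine continuous_of_dominated (bound := fun x => ‖g x‖)
    (fun u => (integrable_exp_mul hg u).aestronglyMeasurable) (fun u => ?_) hg.norm ?_
  · exact Eventually.of_forall fun x => by rw [norm_mul, norm_exp_I_mul_ofReal', one_mul]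
  · exact Eventually.of_forall fun x => by fun_prop

/-- Integration by parts: an integrable derivative makes the transform decay like `1 / |u|`. -/
lemma abs_mul_norm_fourierExp_le {g g' : ℝ → ℂ} (hg : Integrable g) (hg' : Integrable g')
    (hd : ∀ x, HasDerivAt g (g' x) x) (u : ℝ) :
    |u| * ‖fourierExp g u‖ ≤ ∫ x, ‖g' x‖ := by
  have he : ∀ x : ℝ, HasDerivAt (fun x : ℝ => Complex.exp (Complex.I * ((u * x : ℝ) : ℂ)))
      (Complex.I * u * Complex.exp (Complex.I * ((u * x : ℝ) : ℂ))) x := by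
    intro x
    have h1 : HasDerivAt (fun x : ℝ => ((u * x : ℝ) : ℂ)) (u : ℂ) x := by
      simpa using ((hasDerivAt_id x).const_mul u).ofReal_comp
    convert (h1.const_mul Complex.I).cexp using 1
    ring
  have hparts := integral_mul_deriv_eq_deriv_mul_of_integrable (fun x _ => he x)
    (fun x _ => hd x) (integrable_exp_mul hg' u)
    (by
      have := (integrable_exp_mul hg u).const_mul (Complex.I * u)
      refine this.congr (Eventually.of_forall fun x => ?_)
      simp only [Pi.mul_apply]; ring) (integrable_exp_mul hg u)
  have h2 : fourierExp g' u = -(Complex.I * u * fourierExp g u) := by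
    rw [fourierExp, hparts, fourierExp, ← integral_const_mul]
    congr 1
    congr 1
    ext x
    ring
  have h3 := norm_fourierExp_le g' u
  rw [h2, norm_neg, norm_mul, norm_mul, Complex.norm_I, one_mul, Complex.norm_real,
    Real.norm_eq_abs] at h3
  exact h3

lemma integrableOn_fourierExp_div {g g' : ℝ → ℂ} (hg : Integrable g) (hg' : Integrable g')
    (hd : ∀ x, HasDerivAt g (g' x) x) (h : ℝ) {ε : ℝ} (hε : 0 < ε) :
    IntegrableOn (fun t : ℝ => fourierExp g (h - t) / t) {t : ℝ | ε < |t|} := by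
  have hmeas : MeasurableSet {t : ℝ | ε < |t|} := measurableSet_lt measurable_const measurable_id.abs
  set K := |h| * (∫ x, ‖g x‖) + ∫ x, ‖g' x‖ with hK
  have hK0 : 0 ≤ K := by positivity
  have hb : Integrable fun t : ℝ => K * (1 + (ε ^ 2)⁻¹) * (1 + t ^ 2)⁻¹ :=
    integrable_inv_one_add_sq.const_mul _
  refine hb.integrableOn.mono' ?_ ?_
  · refine Measurable.aestronglyMeasurable ?_
    have := (continuous_fourierExp hg).measurable
    fun_prop
  · filter_upwards [ae_restrict_mem hmeas] with t ht
    have ht' : ε < |t| := ht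
    have ht0 : 0 < |t| := hε.trans ht'
    have hC : |t| * ‖fourierExp g (h - t)‖ ≤ K := by
      have h1 := norm_fourierExp_le g (h - t)
      have h2 := abs_mul_norm_fourierExp_le hg hg' hd (h - t)
      have h3 : |t| ≤ |h| + |h - t| := by
        have := abs_sub h (h - t)
        simpa using this
      have := norm_nonneg (fourierExp g (h - t))
      have := abs_nonneg h
      nlinarith
    have hsq : (t ^ 2)⁻¹ ≤ (1 + (ε ^ 2)⁻¹) * (1 + t ^ 2)⁻¹ := by
      have h4 : ε ^ 2 ≤ t ^ 2 := by rw [← sq_abs t]; gcongr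
      have h5 : 0 < t ^ 2 := by rw [← sq_abs t]; positivity
      rw [inv_eq_one_div, ← div_eq_mul_inv, div_le_div_iff₀ h5 (by positivity)]
      have : 1 ≤ (ε ^ 2)⁻¹ * t ^ 2 := by
        rw [inv_mul_eq_div, one_le_div (by positivity)]; exact h4
      nlinarith
    rw [norm_div, Complex.norm_real, Real.norm_eq_abs]
    calc ‖fourierExp g (h - t)‖ / |t| = (|t| * ‖fourierExp g (h - t)‖) * (t ^ 2)⁻¹ := by
          rw [← sq_abs t]; field_simp
      _ ≤ K * ((1 + (ε ^ 2)⁻¹) * (1 + t ^ 2)⁻¹) := by gcongr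
      _ = _ := by ring

/-- Folding the truncated principal value integral onto the half line `t > ε`. -/
lemma integral_trunc_eq {g g' : ℝ → ℂ} (hg : Integrable g) (hg' : Integrable g')
    (hd : ∀ x, HasDerivAt g (g' x) x) (h : ℝ) {ε : ℝ} (hε : 0 < ε) :
    IntegrableOn (fun t : ℝ => (fourierExp g (h - t) - fourierExp g (h + t)) / t) (Set.Ioi ε) ∧
    ∫ u in {u : ℝ | ε < |h - u|}, fourierExp g u / ((h - u : ℝ) : ℂ) =
      ∫ t in Set.Ioi ε, (fourierExp g (h - t) - fourierExp g (h + t)) / t := by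
  have hI := integrableOn_fourierExp_div hg hg' hd h hε
  have hset : {t : ℝ | ε < |t|} = Set.Iio (-ε) ∪ Set.Ioi ε := by
    ext t
    simp only [Set.mem_ofPred_eq, Set.mem_union, Set.mem_Iio, Set.mem_Ioi, lt_abs]
    constructor <;> rintro (h | h)
    · exact Or.inr h
    · left; linarith
    · right; linarith
    · exact Or.inl h
  rw [hset] at hI
  have hI1 := hI.mono_set Set.subset_union_left
  have hI2 := hI.mono_set Set.subset_union_right
  have hI1' : IntegrableOn (fun t : ℝ => fourierExp g (h + t) / (-t : ℝ)) (Set.Ioi ε) := by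
    have := hI1.comp_neg
    simpa using this
  have hdiff : ∀ t : ℝ, (fourierExp g (h - t) - fourierExp g (h + t)) / t =
      fourierExp g (h - t) / t + fourierExp g (h + t) / (-t : ℝ) := by
    intro t
    push_cast
    rw [div_neg, sub_div, sub_eq_add_neg]
  simp_rw [hdiff]
  refine ⟨hI2.add hI1', ?_⟩
  rw [integral_add hI2 hI1']
  have hcv := (Measure.measurePreserving_sub_left volume h).setIntegral_preimage_emb
    (MeasurableEquiv.subLeft h).measurableEmbedding
    (fun t : ℝ => fourierExp g (h - t) / t) {t : ℝ | ε < |t|}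
  simp only [Set.preimage_ofPred_eq, sub_sub_cancel] at hcv
  rw [hcv, hset, setIntegral_union (by
    rw [Set.disjoint_left]
    intro t h1 h2
    simp only [Set.mem_Iio, Set.mem_Ioi] at h1 h2
    linarith) measurableSet_Ioi hI1 hI2, add_comm]
  congr 1
  rw [← integral_Iic_eq_integral_Iio, ← integral_comp_neg_Ioi]
  simp

/-- Fubini on a bounded range of `t`: the `t`-integral of `sin(tx) / t` is a difference of sine
integrals. -/
lemma integral_annulus_eq {g : ℝ → ℂ} (hg : Integrable g) (h : ℝ) {ε R : ℝ} (hε : 0 < ε)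
    (hR : ε ≤ R) :
    ∫ t in ε..R, (fourierExp g (h - t) - fourierExp g (h + t)) / t =
      ∫ x : ℝ, Complex.exp (Complex.I * ((h * x : ℝ) : ℂ)) * g x *
        (-2 * Complex.I * ((sinInt (R * x) - sinInt (ε * x) : ℝ) : ℂ)) := by
  have hpt : ∀ t x : ℝ, t ≠ 0 →
      (Complex.exp (Complex.I * (((h - t) * x : ℝ) : ℂ)) * g x -
        Complex.exp (Complex.I * (((h + t) * x : ℝ) : ℂ)) * g x) / t =
      Complex.exp (Complex.I * ((h * x : ℝ) : ℂ)) * g x *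
        (-2 * Complex.I * ((x * Real.sinc (t * x) : ℝ) : ℂ)) := by
    intro t x ht
    have hs : x * Real.sinc (t * x) = Real.sin (t * x) / t := by
      rcases eq_or_ne x 0 with rfl | hx
      · simp
      · rw [Real.sinc_of_ne_zero (mul_ne_zero ht hx)]; field_simp
    have htc : (t : ℂ) ≠ 0 := by exact_mod_cast ht
    rw [hs]
    push_cast
    rw [show Complex.I * (((h : ℂ) - t) * x) = Complex.I * (h * x) + (-(t * x : ℂ)) * Complex.I by
      ring, show Complex.I * (((h : ℂ) + t) * x) = Complex.I * (h * x) + (t * x : ℂ) * Complex.I by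
      ring, Complex.exp_add, Complex.exp_add, Complex.exp_mul_I, Complex.exp_mul_I,
      Complex.cos_neg, Complex.sin_neg]
    field_simp
    ring
  have hprod : Integrable (Function.uncurry fun t x : ℝ =>
      Complex.exp (Complex.I * ((h * x : ℝ) : ℂ)) * g x *
        (-2 * Complex.I * ((x * Real.sinc (t * x) : ℝ) : ℂ)))
      ((volume.restrict (Set.Ioc ε R)).prod volume) := by
    have hc : Integrable (fun _ : ℝ => 2 * ε⁻¹) (volume.restrict (Set.Ioc ε R)) :=
      integrable_const _
    refine (hc.mul_prod hg.norm).mono' ?_ ?_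
    · have hsc := Real.continuous_sinc
      refine AEStronglyMeasurable.mul ?_ (Continuous.aestronglyMeasurable (by fun_prop))
      exact (integrable_exp_mul hg h).aestronglyMeasurable.comp_snd
    · have hm : ∀ᵐ p ∂((volume.restrict (Set.Ioc ε R)).prod (volume : Measure ℝ)),
          p.1 ∈ Set.Ioc ε R :=
        Measure.quasiMeasurePreserving_fst.ae (ae_restrict_mem measurableSet_Ioc)
      filter_upwards [hm] with p hp
      obtain ⟨t, x⟩ := p
      have ht : 0 < t := hε.trans hp.1
      have hs : |x * Real.sinc (t * x)| ≤ ε⁻¹ := by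
        rcases eq_or_ne x 0 with rfl | hx
        · simpa using hε.le
        · rw [Real.sinc_of_ne_zero (mul_ne_zero ht.ne' hx),
            show x * (Real.sin (t * x) / (t * x)) = Real.sin (t * x) / t by field_simp,
            abs_div, abs_of_pos ht, inv_eq_one_div]
          exact div_le_div₀ zero_le_one (Real.abs_sin_le_one _) hε hp.1.le
      simp only [Function.uncurry, norm_mul, norm_neg, Complex.norm_I, Complex.norm_two, mul_one,
        norm_exp_I_mul_ofReal', one_mul, Complex.norm_real, Real.norm_eq_abs]
      rw [← abs_mul]
      nlinarith [norm_nonneg (g x)]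
  have hswap := integral_integral_swap hprod
  rw [intervalIntegral.integral_of_le hR]
  calc _ = _ := by
        refine setIntegral_congr_fun measurableSet_Ioc (fun t ht => ?_)
        have ht0 : t ≠ 0 := (hε.trans ht.1).ne'
        simp only [fourierExp]
        rw [← integral_sub (integrable_exp_mul hg _) (integrable_exp_mul hg _),
          ← integral_div]
        exact integral_congr_ae (Eventually.of_forall fun x => hpt t x ht0)
    _ = _ := hswap
    _ = _ := by
        congr 1
        ext x
        rw [integral_const_mul, integral_const_mul, integral_complex_ofReal, integral_const_mul,
          ← intervalIntegral.integral_of_le hR, ← smul_eq_mul (a := x),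
          intervalIntegral.smul_integral_comp_mul_right, sinInt, sinInt,
          intervalIntegral.integral_interval_sub_left
            (Real.continuous_sinc.intervalIntegrable _ _)
            (Real.continuous_sinc.intervalIntegrable _ _)]

/-- Dominated convergence for uniformly bounded multipliers `-2i φ` against an integrable `f`. -/
lemma tendsto_integral_bddMultiplier {f : ℝ → ℂ} (hf : Integrable f) {ι : Type*} {l : Filter ι}
    [l.IsCountablyGenerated] {φ : ι → ℝ → ℝ} {ψ : ℝ → ℝ} {M : ℝ}
    (hm : ∀ i, Measurable (φ i)) (hb : ∀ i x, |φ i x| ≤ M)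
    (hlim : ∀ x, Tendsto (fun i => φ i x) l (𝓝 (ψ x))) :
    Tendsto (fun i => ∫ x, f x * (-2 * Complex.I * ((φ i x : ℝ) : ℂ))) l
      (𝓝 (∫ x, f x * (-2 * Complex.I * ((ψ x : ℝ) : ℂ)))) := by
  refine tendsto_integral_filter_of_dominated_convergence (fun x => ‖f x‖ * (2 * M)) ?_ ?_
    (hf.norm.mul_const _) ?_
  · refine Eventually.of_forall fun i => hf.aestronglyMeasurable.mul ?_
    have := hm i
    exact Measurable.aestronglyMeasurable (by fun_prop)
  · refine Eventually.of_forall fun i => Eventually.of_forall fun x => ?_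
    rw [norm_mul, norm_mul, norm_mul, norm_neg, Complex.norm_I, Complex.norm_two, mul_one,
      Complex.norm_real, Real.norm_eq_abs]
    gcongr
    exact hb i x
  · refine Eventually.of_forall fun x => ?_
    have h1 : Tendsto (fun i => ((φ i x : ℝ) : ℂ)) l (𝓝 ((ψ x : ℝ) : ℂ)) :=
      (Complex.continuous_ofReal.tendsto _).comp (hlim x)
    exact (h1.const_mul _).const_mul _

lemma abs_sign_le_one (x : ℝ) : |Real.sign x| ≤ 1 := by
  rcases Real.sign_apply_eq x with h | h | h <;> simp [h]

lemma measurable_real_sign : Measurable Real.sign := by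
  unfold Real.sign
  exact Measurable.ite measurableSet_Iio measurable_const
    (Measurable.ite measurableSet_Ioi measurable_const measurable_const)

lemma integral_trunc_eq_sinInt {g g' : ℝ → ℂ} (hg : Integrable g) (hg' : Integrable g')
    (hd : ∀ x, HasDerivAt g (g' x) x) (h : ℝ) {ε : ℝ} (hε : 0 < ε) :
    ∫ u in {u : ℝ | ε < |h - u|}, fourierExp g u / ((h - u : ℝ) : ℂ) =
      ∫ x : ℝ, Complex.exp (Complex.I * ((h * x : ℝ) : ℂ)) * g x *
        (-2 * Complex.I * ((Real.pi / 2 * Real.sign x - sinInt (ε * x) : ℝ) : ℂ)) := by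
  obtain ⟨hint, heq⟩ := integral_trunc_eq hg hg' hd h hε
  obtain ⟨M, hM⟩ := exists_abs_sinInt_le
  rw [heq]
  have hc := continuous_sinInt.measurable
  have h1 := intervalIntegral_tendsto_integral_Ioi ε hint tendsto_id
  have h2 := tendsto_integral_bddMultiplier (l := atTop) (integrable_exp_mul hg h) (M := M + M)
    (φ := fun R x => sinInt (R * x) - sinInt (ε * x)) (fun R => by fun_prop)
    (fun R x => (abs_sub _ _).trans (add_le_add (hM _) (hM _)))
    (fun x => (tendsto_sinInt_mul x).sub_const _)
  refine tendsto_nhds_unique (h1.congr' ?_) h2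
  filter_upwards [eventually_ge_atTop ε] with R hR
  exact integral_annulus_eq hg h hε hR

/-- The principal value Hilbert transform of a Fourier transform: the multiplier `-i sign`, up to
the factor `1 / π`. -/
lemma tendsto_integral_trunc {g g' : ℝ → ℂ} (hg : Integrable g) (hg' : Integrable g')
    (hd : ∀ x, HasDerivAt g (g' x) x) (h : ℝ) :
    Tendsto (fun ε : ℝ => ∫ u in {u : ℝ | ε < |h - u|}, fourierExp g u / ((h - u : ℝ) : ℂ))
      (𝓝[>] 0) (𝓝 (-Real.pi * ∫ x : ℝ, Complex.exp (Complex.I * ((h * x : ℝ) : ℂ)) * Complex.I *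
        (Real.sign x : ℂ) * g x)) := by
  obtain ⟨M, hM⟩ := exists_abs_sinInt_le
  have hc := continuous_sinInt.measurable
  have hs := measurable_real_sign
  have hlim := tendsto_integral_bddMultiplier (l := 𝓝[>] (0 : ℝ)) (integrable_exp_mul hg h)
    (M := Real.pi / 2 + M)
    (φ := fun ε x => Real.pi / 2 * Real.sign x - sinInt (ε * x))
    (ψ := fun x => Real.pi / 2 * Real.sign x) (fun R => by fun_prop)
    (fun R x => by
      refine (abs_sub _ _).trans (add_le_add ?_ (hM _))
      rw [abs_mul, abs_of_pos (by positivity)]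
      have := abs_sign_le_one x
      have := Real.pi_pos
      nlinarith)
    (fun x => by
      have h0 : Tendsto (fun ε : ℝ => sinInt (ε * x)) (𝓝[>] 0) (𝓝 (sinInt (0 * x))) :=
        ((continuous_sinInt.comp (continuous_mul_const x)).tendsto 0).mono_left
          nhdsWithin_le_nhds
      have h00 : sinInt (0 * x) = 0 := by simp [sinInt]
      rw [h00] at h0
      simpa using h0.const_sub (Real.pi / 2 * Real.sign x))
  have hval : ∫ x : ℝ, Complex.exp (Complex.I * ((h * x : ℝ) : ℂ)) * g x *
      (-2 * Complex.I * ((Real.pi / 2 * Real.sign x : ℝ) : ℂ)) =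
      -Real.pi * ∫ x : ℝ, Complex.exp (Complex.I * ((h * x : ℝ) : ℂ)) * Complex.I *
        (Real.sign x : ℂ) * g x := by
    rw [← integral_const_mul]
    congr 1
    ext x
    push_cast
    ring
  rw [← hval]
  refine hlim.congr' ?_
  filter_upwards [self_mem_nhdsWithin] with ε hε
  exact (integral_trunc_eq_sinInt hg hg' hd h hε).symm

/-! ### The spectral density -/

/-- The factor `(a + isx)^{-p}` of the spectral density; the two factors have `s = 1` and
`s = -1`. -/
noncomputable def specFactor (a s p x : ℝ) : ℂ :=
  ((a : ℂ) + (s * x : ℝ) * Complex.I) ^ ((-p : ℝ) : ℂ)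

lemma specFactor_base_mem {a : ℝ} (ha : 0 < a) (y : ℝ) :
    (a : ℂ) + (y : ℂ) * Complex.I ∈ Complex.slitPlane := by
  left
  simpa using ha

lemma hasDerivAt_specFactor {a : ℝ} (ha : 0 < a) (s p x : ℝ) :
    HasDerivAt (specFactor a s p) (((-p : ℝ) : ℂ) * (s * Complex.I) * specFactor a s (p + 1) x)
      x := by
  have h1 : HasDerivAt (fun x : ℝ => (a : ℂ) + (s * x : ℝ) * Complex.I) (s * Complex.I) x := by
    have : HasDerivAt (fun x : ℝ => ((s * x : ℝ) : ℂ)) (s : ℂ) x := by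
      simpa using ((hasDerivAt_id x).const_mul s).ofReal_comp
    exact (this.mul_const Complex.I).const_add _
  have h2 := ((hasDerivAt_id _).cpow_const (c := ((-p : ℝ) : ℂ))
    (specFactor_base_mem ha (s * x))).comp x h1
  refine h2.congr_deriv ?_
  simp only [id]
  have he : ((-p : ℝ) : ℂ) - 1 = ((-(p + 1) : ℝ) : ℂ) := by push_cast; ring
  rw [he, specFactor]
  ring

lemma norm_specFactor_le {a s p : ℝ} (ha : 0 < a) (hs : |s| = 1) (hp : 0 ≤ p) (x : ℝ) :
    ‖specFactor a s p x‖ ≤ (min a 1 / 2) ^ (-p) * (1 + ‖x‖) ^ (-p) := by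
  have hm : 0 < min a 1 := lt_min ha one_pos
  rw [specFactor, Complex.norm_cpow_real, ← Real.mul_rpow (by positivity) (by positivity)]
  refine Real.rpow_le_rpow_of_nonpos (by positivity) ?_ (by linarith)
  have h1 := Complex.abs_re_le_norm ((a : ℂ) + (s * x : ℝ) * Complex.I)
  have h2 := Complex.abs_im_le_norm ((a : ℂ) + (s * x : ℝ) * Complex.I)
  simp only [Complex.add_re, Complex.ofReal_re, Complex.re_ofReal_mul, Complex.I_re, mul_zero,
    add_zero, Complex.add_im, Complex.ofReal_im, Complex.im_ofReal_mul, Complex.I_im, mul_one,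
    zero_add, abs_mul, hs, one_mul, abs_of_pos ha] at h1 h2
  rw [Real.norm_eq_abs]
  have h3 := min_le_left a 1
  have h4 := min_le_right a 1
  nlinarith [abs_nonneg x]

lemma integrable_specFactor_mul {a b s t p q : ℝ} (ha : 0 < a) (hb : 0 < b) (hs : |s| = 1)
    (ht : |t| = 1) (hp : 0 ≤ p) (hq : 0 ≤ q) (hpq : 1 < p + q) :
    Integrable fun x => specFactor a s p x * specFactor b t q x := by
  have hI := (integrable_one_add_norm (E := ℝ) (μ := volume) (r := p + q) (by simpa using hpq))
  refine (hI.const_mul ((min a 1 / 2) ^ (-p) * (min b 1 / 2) ^ (-q))).mono' ?_ ?_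
  · have h1 : Continuous (specFactor a s p) :=
      continuous_iff_continuousAt.2 fun x => (hasDerivAt_specFactor ha s p x).continuousAt
    have h2 : Continuous (specFactor b t q) :=
      continuous_iff_continuousAt.2 fun x => (hasDerivAt_specFactor hb t q x).continuousAt
    exact (h1.mul h2).aestronglyMeasurable
  · refine Eventually.of_forall fun x => ?_
    have hx : 0 < 1 + ‖x‖ := by positivity
    rw [norm_mul, neg_add, Real.rpow_add hx]
    calc _ ≤ ((min a 1 / 2) ^ (-p) * (1 + ‖x‖) ^ (-p)) *
          ((min b 1 / 2) ^ (-q) * (1 + ‖x‖) ^ (-q)) := by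
          gcongr
          · exact norm_specFactor_le ha hs hp x
          · exact norm_specFactor_le hb ht hq x
      _ = _ := by ring

lemma conj_specFactor {a : ℝ} (ha : 0 < a) (s p x : ℝ) :
    (starRingEnd ℂ) (specFactor a s p x) = specFactor a s p (-x) := by
  have harg := Complex.mem_slitPlane_iff_arg.1 (specFactor_base_mem ha (s * x))
  have hc := Complex.conj_cpow _ ((-p : ℝ) : ℂ) harg.1
  rw [Complex.conj_ofReal] at hc
  rw [specFactor, specFactor, ← hc]
  simp

/-- Hermitian symmetry of `g` makes its transform real. -/
lemma fourierExp_im_eq_zero {g : ℝ → ℂ} (hsym : ∀ x, (starRingEnd ℂ) (g x) = g (-x)) (u : ℝ) :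
    (fourierExp g u).im = 0 := by
  rw [← Complex.conj_eq_iff_im, fourierExp, ← integral_conj,
    ← integral_neg_eq_self (fun x : ℝ => cexp (I * ((u * x : ℝ) : ℂ)) * g x)]
  congr 1
  ext x
  rw [map_mul, hsym, ← Complex.exp_conj, map_mul, Complex.conj_I, Complex.conj_ofReal]
  congr 2
  push_cast
  ring

/-- For `a_j, a_k, ν_j, ν_k > 0` and
`g_{jk}(x) = (a_j + ix)^{−ν_j−1/2} (a_k − ix)^{−ν_k−1/2}`, with
`C^Re(h) = ∫ e^{ihx} g_{jk}(x) dx` (a real-valued function of `h`), for every `h` the principal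
value Hilbert transform of `C^Re` at `h` exists and
`C^Im(h) := ∫ e^{ihx} i sign(x) g_{jk}(x) dx = −H[C^Re](h)`. -/
theorem stmt_16 (aj ak νj νk : ℝ) (haj : 0 < aj) (hak : 0 < ak) (hνj : 0 < νj) (hνk : 0 < νk)
    (g : ℝ → ℂ)
    (hg : ∀ x : ℝ, g x = ((aj : ℂ) + x * Complex.I) ^ ((-(νj + 1/2) : ℝ) : ℂ) *
      ((ak : ℂ) - x * Complex.I) ^ ((-(νk + 1/2) : ℝ) : ℂ))
    (CRe CIm : ℝ → ℂ)
    (hCRe : ∀ h : ℝ, CRe h = ∫ x : ℝ, Complex.exp (Complex.I * ((h * x : ℝ) : ℂ)) * g x)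
    (hCIm : ∀ h : ℝ, CIm h = ∫ x : ℝ,
      Complex.exp (Complex.I * ((h * x : ℝ) : ℂ)) * Complex.I * (Real.sign x : ℂ) * g x) :
    ∀ h : ℝ, (CRe h).im = 0 ∧
      ∃ L : ℝ,
        Tendsto (fun ε : ℝ => (1 / Real.pi) * ∫ u in {u : ℝ | ε < |h - u|}, (CRe u).re / (h - u))
          (𝓝[>] (0 : ℝ)) (𝓝 L) ∧
        CIm h = ((-L : ℝ) : ℂ) := by
  have hg1 : g = fun x => specFactor aj 1 (νj + 1 / 2) x * specFactor ak (-1) (νk + 1 / 2) x := by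
    ext x
    rw [hg, specFactor, specFactor]
    push_cast
    ring_nf
  have h1 : |(1 : ℝ)| = 1 := abs_one
  have h2 : |(-1 : ℝ)| = 1 := by simp
  have hgi : Integrable g := by
    rw [hg1]
    exact integrable_specFactor_mul haj hak h1 h2 (by linarith) (by linarith) (by linarith)
  have hd : ∀ x, HasDerivAt g _ x := fun x => by
    rw [hg1]
    exact (hasDerivAt_specFactor haj 1 (νj + 1 / 2) x).mul
      (hasDerivAt_specFactor hak (-1) (νk + 1 / 2) x)
  have hgi' : Integrable fun x =>
      ((-(νj + 1 / 2) : ℝ) : ℂ) * (((1 : ℝ) : ℂ) * Complex.I) *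
        specFactor aj 1 (νj + 1 / 2 + 1) x * specFactor ak (-1) (νk + 1 / 2) x +
      specFactor aj 1 (νj + 1 / 2) x * (((-(νk + 1 / 2) : ℝ) : ℂ) * (((-1 : ℝ) : ℂ) * Complex.I) *
        specFactor ak (-1) (νk + 1 / 2 + 1) x) := by
    have i1 := (integrable_specFactor_mul (p := νj + 1 / 2 + 1) (q := νk + 1 / 2) haj hak h1 h2
      (by linarith) (by linarith) (by linarith)).const_mul
      (((-(νj + 1 / 2) : ℝ) : ℂ) * (((1 : ℝ) : ℂ) * Complex.I))
    have i2 := (integrable_specFactor_mul (p := νj + 1 / 2) (q := νk + 1 / 2 + 1) haj hak h1 h2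
      (by linarith) (by linarith) (by linarith)).const_mul
      (((-(νk + 1 / 2) : ℝ) : ℂ) * (((-1 : ℝ) : ℂ) * Complex.I))
    refine (i1.add i2).congr (Eventually.of_forall fun x => ?_)
    simp only [Pi.add_apply]
    ring
  have hsym : ∀ x, (starRingEnd ℂ) (g x) = g (-x) := by
    intro x
    rw [hg1]
    simp only [map_mul, conj_specFactor haj, conj_specFactor hak]
  have hC : ∀ u, CRe u = fourierExp g u := hCRe
  have him : ∀ u, (CRe u).im = 0 := fun u => by rw [hC]; exact fourierExp_im_eq_zero hsym u
  intro h
  refine ⟨him h, -(CIm h).re, ?_⟩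
  have hlim := (tendsto_integral_trunc hgi hgi' hd h).const_mul (1 / Real.pi : ℂ)
  have hpi : (Real.pi : ℂ) ≠ 0 := by exact_mod_cast Real.pi_ne_zero
  rw [← hCIm h, ← mul_assoc, show (1 / Real.pi : ℂ) * -Real.pi = -1 by field_simp,
    neg_one_mul] at hlim
  -- the truncated integrals are real, hence so is their limit
  have hreal : ∀ ε : ℝ, (1 / Real.pi : ℂ) *
      ∫ u in {u : ℝ | ε < |h - u|}, fourierExp g u / ((h - u : ℝ) : ℂ) =
      (((1 / Real.pi) * ∫ u in {u : ℝ | ε < |h - u|}, (CRe u).re / (h - u) : ℝ) : ℂ) := by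
    intro ε
    rw [Complex.ofReal_mul, ← integral_complex_ofReal]
    push_cast
    congr 2
    ext u
    rw [← hC, ← Complex.re_add_im (CRe u), him]
    simp
  simp_rw [hreal] at hlim
  have hre := (Complex.continuous_re.tendsto _).comp hlim
  have hi := (Complex.continuous_im.tendsto _).comp hlim
  simp only [Function.comp_def, Complex.ofReal_re, Complex.ofReal_im, Complex.neg_re,
    Complex.neg_im] at hre hi
  refine ⟨hre, ?_⟩
  have hz : -(CIm h).im = 0 := tendsto_nhds_unique hi tendsto_const_nhds
  apply Complex.ext
  · simp
  · simpa using hz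
end

section
/- Let a_j, a_k, ν_j, ν_k > 0. Then a_j^{ν_j} a_k^{ν_k} Γ(ν_j + ν_k) ≤ ((a_j + a_k)/2)^{ν_j + ν_k} · √( Γ(2ν_j) Γ(2ν_k) ), with equality if and only if a_j = a_k and ν_j = ν_k. Equivalently, the marginal cross-correlation at lag zero of the multivariate Matérn model with real directional measure, C_{jk}(0)/Re(σ_{jk}) = (a_j^{ν_j} a_k^{ν_k} / a_+^{2ν_+}) Γ(2ν_+)/√(Γ(2ν_j)Γ(2ν_k)) with a_+ = (a_j+a_k)/2 and ν_+ = (ν_j+ν_k)/2, is at most 1, and is strictly less than 1 whenever a_j ≠ a_k or ν_j ≠ ν_k. -/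
/-!
The inequality is Cauchy–Schwarz on `L²(0, ∞)` for `f u = u ^ (νj - 1/2) * exp (-aj * u)` and
`g u = u ^ (νk - 1/2) * exp (-ak * u)`. By the Gamma integral,
`∫ f² = Γ(2νj) / (2aj) ^ (2νj)`, `∫ g² = Γ(2νk) / (2ak) ^ (2νk)` and
`∫ f g = Γ(νj + νk) / (aj + ak) ^ (νj + νk)`, so `(∫ f g)² ≤ ∫ f² * ∫ g²` is the square of the
claim after clearing denominators. If equality holds, then `f` and `g` are proportional almost
everywhere, hence everywhere on `(0, ∞)` by continuity, and comparing the values at `1, 2, 4`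
forces `aj = ak` and `νj = νk`. The lemma `gammaKernel_cauchy_schwarz` carries both parts.
-/

open MeasureTheory Set

/-- The square root `u ^ (ν - 1/2) * exp (-a u)` of the Gamma density `u ^ (2ν - 1) * exp (-2a u)`,
without normalization. -/
noncomputable def gammaKernel (a ν u : ℝ) : ℝ := u ^ (ν - 1 / 2) * Real.exp (-(a * u))

lemma gammaKernel_pos (a ν : ℝ) {u : ℝ} (hu : 0 < u) : 0 < gammaKernel a ν u :=
  mul_pos (Real.rpow_pos_of_pos hu _) (Real.exp_pos _)

lemma continuousOn_gammaKernel (a ν : ℝ) : ContinuousOn (gammaKernel a ν) (Ioi 0) := by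
  unfold gammaKernel
  refine ContinuousOn.mul (fun x hx => ?_) (by fun_prop)
  exact (Real.continuousAt_rpow_const x _ (Or.inl (ne_of_gt hx))).continuousWithinAt

lemma gammaKernel_mul (a b ν μ : ℝ) {u : ℝ} (hu : 0 < u) :
    gammaKernel a ν u * gammaKernel b μ u = u ^ (ν + μ - 1) * Real.exp (-((a + b) * u)) := by
  have h1 : u ^ (ν + μ - 1) = u ^ (ν - 1 / 2) * u ^ (μ - 1 / 2) := by
    rw [← Real.rpow_add hu]; ring_nf
  have h2 : Real.exp (-((a + b) * u)) = Real.exp (-(a * u)) * Real.exp (-(b * u)) := by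
    rw [← Real.exp_add]; ring_nf
  rw [h1, h2, gammaKernel, gammaKernel]; ring

lemma integrableOn_gammaKernel_mul {a b ν μ : ℝ} (ha : 0 < a) (hb : 0 < b) (hν : 0 < ν)
    (hμ : 0 < μ) :
    IntegrableOn (fun u => gammaKernel a ν u * gammaKernel b μ u) (Ioi 0) := by
  have h := integrableOn_rpow_mul_exp_neg_mul_rpow (p := 1) (s := ν + μ - 1) (b := a + b)
    (by linarith) one_pos (by linarith)
  refine h.congr_fun (fun u hu => ?_) measurableSet_Ioi
  simp only [gammaKernel_mul a b ν μ hu, Real.rpow_one, neg_mul]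

lemma integral_gammaKernel_mul {a b ν μ : ℝ} (ha : 0 < a) (hb : 0 < b) (hν : 0 < ν)
    (hμ : 0 < μ) :
    ∫ u in Ioi 0, gammaKernel a ν u * gammaKernel b μ u =
      Real.Gamma (ν + μ) / (a + b) ^ (ν + μ) := by
  rw [setIntegral_congr_fun measurableSet_Ioi (fun u hu => gammaKernel_mul a b ν μ hu),
    Real.integral_rpow_mul_exp_neg_mul_Ioi (by linarith) (by linarith),
    Real.div_rpow zero_le_one (by linarith), Real.one_rpow]
  ring

/-- Proportional kernels have the same parameters: on the points `1, 2, 4` the logarithm of the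
ratio is `-d`, `e L - 2 d`, `2 e L - 4 d` with `d = a - b`, `e = ν - μ`, `L = log 2`, and these
three values agree only if `d = e = 0`. -/
lemma eq_of_gammaKernel_proportional {a b ν μ c : ℝ}
    (h : ∀ u ∈ Ioi (0 : ℝ), gammaKernel a ν u = c * gammaKernel b μ u) : a = b ∧ ν = μ := by
  have hc : 0 < c := by
    have h1 := h 1 (mem_Ioi.mpr one_pos)
    have h2 := gammaKernel_pos a ν one_pos
    have h3 := gammaKernel_pos b μ one_pos
    rw [h1] at h2
    exact pos_of_mul_pos_left h2 h3.le
  have hlog : ∀ a ν u : ℝ, 0 < u →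
      Real.log (gammaKernel a ν u) = (ν - 1 / 2) * Real.log u - a * u := by
    intro a ν u hu
    rw [gammaKernel, Real.log_mul (Real.rpow_pos_of_pos hu _).ne' (Real.exp_pos _).ne',
      Real.log_rpow hu, Real.log_exp]
    ring
  have key : ∀ u : ℝ, 0 < u → (ν - 1 / 2) * Real.log u - a * u =
      Real.log c + ((μ - 1 / 2) * Real.log u - b * u) := by
    intro u hu
    rw [← hlog a ν u hu, ← hlog b μ u hu, h u (mem_Ioi.mpr hu),
      Real.log_mul hc.ne' (gammaKernel_pos b μ hu).ne']
  have k1 := key 1 one_pos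
  have k2 := key 2 two_pos
  have k4 := key 4 four_pos
  have h4 : Real.log 4 = 2 * Real.log 2 := by
    rw [show (4 : ℝ) = 2 ^ 2 by norm_num, Real.log_pow]; norm_num
  rw [h4] at k4
  rw [Real.log_one] at k1
  have hL : 0 < Real.log 2 := Real.log_pos one_lt_two
  have hab : a = b := by linarith
  refine ⟨hab, ?_⟩
  subst hab
  have : (ν - μ) * Real.log 2 = 0 := by linarith
  rcases mul_eq_zero.mp this with h | h <;> linarith

lemma gammaKernel_cauchy_schwarz {a b ν μ : ℝ} (ha : 0 < a) (hb : 0 < b) (hν : 0 < ν)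
    (hμ : 0 < μ) {A B C : ℝ}
    (hA : ∫ u in Ioi 0, gammaKernel a ν u * gammaKernel a ν u = A)
    (hB : ∫ u in Ioi 0, gammaKernel b μ u * gammaKernel b μ u = B)
    (hC : ∫ u in Ioi 0, gammaKernel a ν u * gammaKernel b μ u = C) (hBpos : 0 < B) :
    C ^ 2 ≤ A * B ∧ (C ^ 2 = A * B → a = b ∧ ν = μ) := by
  have iA := integrableOn_gammaKernel_mul ha ha hν hν
  have iB := integrableOn_gammaKernel_mul hb hb hμ hμ
  have iC := integrableOn_gammaKernel_mul ha hb hν hμ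
  -- `C / B` is the coefficient of the orthogonal projection of the first kernel on the second.
  set c := C / B with hc
  have hcB : c * B = C := div_mul_cancel₀ _ hBpos.ne'
  have hexp : (fun u => (gammaKernel a ν u - c * gammaKernel b μ u) ^ 2) = fun u =>
      gammaKernel a ν u * gammaKernel a ν u - 2 * c * (gammaKernel a ν u * gammaKernel b μ u)
        + c ^ 2 * (gammaKernel b μ u * gammaKernel b μ u) := by
    funext u; ring
  have hint : IntegrableOn (fun u => (gammaKernel a ν u - c * gammaKernel b μ u) ^ 2)
      (Ioi 0) := by
    rw [hexp]
    exact (iA.sub (iC.const_mul _)).add (iB.const_mul _)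
  have hval : (∫ u in Ioi 0, (gammaKernel a ν u - c * gammaKernel b μ u) ^ 2) * B
      = A * B - C ^ 2 := by
    have iAC : IntegrableOn (fun u => gammaKernel a ν u * gammaKernel a ν u
        - 2 * c * (gammaKernel a ν u * gammaKernel b μ u)) (Ioi 0) := iA.sub (iC.const_mul _)
    rw [hexp, integral_add iAC (iB.const_mul _),
      integral_sub iA (iC.const_mul _), integral_const_mul, integral_const_mul, hA, hB, hC,
      ← hcB]
    ring
  have hnn : 0 ≤ ∫ u in Ioi 0, (gammaKernel a ν u - c * gammaKernel b μ u) ^ 2 :=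
    integral_nonneg fun u => sq_nonneg _
  refine ⟨by nlinarith [mul_nonneg hnn hBpos.le], fun heq => ?_⟩
  have hzero : ∫ u in Ioi 0, (gammaKernel a ν u - c * gammaKernel b μ u) ^ 2 = 0 := by
    have : (∫ u in Ioi 0, (gammaKernel a ν u - c * gammaKernel b μ u) ^ 2) * B = 0 := by
      rw [hval, heq, sub_self]
    exact (mul_eq_zero.mp this).resolve_right hBpos.ne'
  have hae := (integral_eq_zero_iff_of_nonneg (fun u => sq_nonneg _) hint).mp hzero
  have hall := Measure.eqOn_open_of_ae_eq hae isOpen_Ioi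
    (((continuousOn_gammaKernel a ν).sub
      (continuousOn_const.mul (continuousOn_gammaKernel b μ))).pow 2) continuousOn_const
  refine eq_of_gammaKernel_proportional (c := c) fun u hu => ?_
  have := pow_eq_zero_iff two_ne_zero |>.mp (hall hu)
  linarith

/-- For `a_j, a_k, ν_j, ν_k > 0`,
`a_j^{ν_j} a_k^{ν_k} Γ(ν_j + ν_k) ≤ ((a_j+a_k)/2)^{ν_j+ν_k} √(Γ(2ν_j) Γ(2ν_k))`,
with equality if and only if `a_j = a_k` and `ν_j = ν_k`. -/
theorem stmt_19 (aj ak νj νk : ℝ) (haj : 0 < aj) (hak : 0 < ak) (hνj : 0 < νj) (hνk : 0 < νk) :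
    aj ^ νj * ak ^ νk * Real.Gamma (νj + νk) ≤
      ((aj + ak) / 2) ^ (νj + νk) * Real.sqrt (Real.Gamma (2 * νj) * Real.Gamma (2 * νk)) ∧
    (aj ^ νj * ak ^ νk * Real.Gamma (νj + νk) =
        ((aj + ak) / 2) ^ (νj + νk) * Real.sqrt (Real.Gamma (2 * νj) * Real.Gamma (2 * νk)) ↔
      aj = ak ∧ νj = νk) := by
  have hGj : 0 < Real.Gamma (2 * νj) := Real.Gamma_pos_of_pos (by linarith)
  have hGk : 0 < Real.Gamma (2 * νk) := Real.Gamma_pos_of_pos (by linarith)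
  have hG : 0 < Real.Gamma (νj + νk) := Real.Gamma_pos_of_pos (by linarith)
  have hpow : ∀ a ν : ℝ, 0 < a → (a + a) ^ (ν + ν) = (2 ^ ν * a ^ ν) ^ 2 := by
    intro a ν ha
    rw [Real.rpow_add (by linarith), ← two_mul, Real.mul_rpow zero_le_two ha.le, sq]
  obtain ⟨hle, heq⟩ := gammaKernel_cauchy_schwarz haj hak hνj hνk
    (integral_gammaKernel_mul haj haj hνj hνj) (integral_gammaKernel_mul hak hak hνk hνk)
    (integral_gammaKernel_mul haj hak hνj hνk)
    (div_pos (by rwa [← two_mul]) (Real.rpow_pos_of_pos (by linarith) _))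
  rw [hpow aj νj haj, hpow ak νk hak, ← two_mul, ← two_mul] at hle heq
  rw [Real.div_rpow (by linarith) zero_le_two, Real.rpow_add two_pos]
  have hP : 0 < aj ^ νj := Real.rpow_pos_of_pos haj _
  have hQ : 0 < ak ^ νk := Real.rpow_pos_of_pos hak _
  have hS : 0 < (aj + ak) ^ (νj + νk) := Real.rpow_pos_of_pos (by linarith) _
  have hx : (0 : ℝ) < 2 ^ νj := Real.rpow_pos_of_pos two_pos _
  have hy : (0 : ℝ) < 2 ^ νk := Real.rpow_pos_of_pos two_pos _
  have hrefl : aj = ak ∧ νj = νk → aj ^ νj * ak ^ νk * Real.Gamma (νj + νk) =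
      (aj + ak) ^ (νj + νk) / (2 ^ νj * 2 ^ νk) *
        Real.sqrt (Real.Gamma (2 * νj) * Real.Gamma (2 * νk)) := by
    rintro ⟨rfl, rfl⟩
    rw [Real.sqrt_mul_self hGj.le, hpow aj νj haj, ← two_mul]
    field_simp
  have hR : Real.sqrt (Real.Gamma (2 * νj) * Real.Gamma (2 * νk)) ^ 2 =
    Real.Gamma (2 * νj) * Real.Gamma (2 * νk) := Real.sq_sqrt (mul_pos hGj hGk).le
  have hR0 : 0 < Real.sqrt (Real.Gamma (2 * νj) * Real.Gamma (2 * νk)) :=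
    Real.sqrt_pos.mpr (mul_pos hGj hGk)
  rw [div_mul_div_comm, ← hR] at hle heq
  generalize Real.sqrt (Real.Gamma (2 * νj) * Real.Gamma (2 * νk)) = R at *
  generalize Real.Gamma (νj + νk) = G at *
  generalize aj ^ νj = P at *
  generalize ak ^ νk = Q at *
  generalize (aj + ak) ^ (νj + νk) = S at *
  generalize (2 : ℝ) ^ νj = x at *
  generalize (2 : ℝ) ^ νk = y at *
  rw [← mul_pow, ← div_pow] at hle heq
  have hle' : G / S ≤ R / (x * P * (y * Q)) :=
    (pow_le_pow_iff_left₀ (by positivity) (by positivity) two_ne_zero).mp hle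
  refine ⟨?_, fun h => heq ?_, hrefl⟩
  · rw [div_le_div_iff₀ hS (by positivity)] at hle'
    rw [div_mul_eq_mul_div, le_div_iff₀ (by positivity)]
    linarith
  · congr 1
    rw [div_mul_eq_mul_div, eq_div_iff (by positivity)] at h
    rw [div_eq_div_iff hS.ne' (by positivity)]
    linarith
end
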